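/- arXiv:1006.5074 — 3 statements merged into one kernel-verified Lean document; each statement's English description precedes it below -/
import Mathlib

section
/- Let G be a group, H a subgroup of G, and a ∈ G. Suppose that Ha ∩ a⁻¹H ≠ ∅ and that the subgroup K = H ∩ (a⁻¹Ha) is a normal subgroup of H. Then K is a normal subgroup of the subgroup generated by H ∪ {a}. -/
open Pointwise

/-!
A common element of `Ha` and `a⁻¹H` amounts to some `h ∈ H` with `u = aha ∈ H`. Conjugation by `a`
carries `K = H ∩ a⁻¹Ha` to `aHa⁻¹ ∩ H`, and so does conjugation by `u`, because `uHu⁻¹ = H` and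
`(ua⁻¹)H(ua⁻¹)⁻¹ = (ah)H(ah)⁻¹ = aHa⁻¹`. Since `u ∈ H` normalizes `K`, so does `a`.
-/

section

variable {G : Type*} [Group G] {H : Subgroup G} {a h : G}

theorem coe_conj_inv_smul (H : Subgroup G) (a : G) :
    ((MulAut.conj a⁻¹ • H : Subgroup G) : Set G) = {a⁻¹} * (H : Set G) * {a} := by
  simp only [Subgroup.coe_pointwise_smul, Set.singleton_mul, Set.mul_singleton, Set.image_image,
    ← Set.image_smul, MulAut.smul_def, MulAut.conj_apply, inv_inv]

theorem exists_mem_mul_mul_mem_of_rightCoset_inter_leftCoset_nonempty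
    (hne : (((H : Set G) * {a}) ∩ ({a⁻¹} * (H : Set G))).Nonempty) :
    ∃ h ∈ H, a * h * a ∈ H := by
  rw [Set.mul_singleton, Set.singleton_mul] at hne
  obtain ⟨_, ⟨h, hh, rfl⟩, u, hu, hua : a⁻¹ * u = h * a⟩ := hne
  refine ⟨h, hh, ?_⟩
  rwa [mul_assoc, ← hua, mul_inv_cancel_left]

theorem conj_smul_inf_conj_inv_smul (H : Subgroup G) (a : G) :
    MulAut.conj a • (H ⊓ MulAut.conj a⁻¹ • H) = H ⊓ MulAut.conj a • H := by
  rw [Subgroup.smul_inf, map_inv, smul_inv_smul, inf_comm]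

theorem conj_mul_mul_smul_inf_conj_inv_smul (hh : h ∈ H) (hu : a * h * a ∈ H) :
    MulAut.conj (a * h * a) • (H ⊓ MulAut.conj a⁻¹ • H) = H ⊓ MulAut.conj a • H := by
  have conj_conj : MulAut.conj (a * h * a) • MulAut.conj a⁻¹ • H = MulAut.conj a • H := by
    rw [smul_smul, ← map_mul, mul_inv_cancel_right, map_mul, mul_smul,
      Subgroup.conj_smul_eq_self_of_mem hh]
  rw [Subgroup.smul_inf, Subgroup.conj_smul_eq_self_of_mem hu, conj_conj]

theorem mem_normalizer_inf_conj_inv_smul (hh : h ∈ H) (hu : a * h * a ∈ H)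
    (hnorm : a * h * a ∈ Subgroup.normalizer (H ⊓ MulAut.conj a⁻¹ • H : Subgroup G)) :
    a ∈ Subgroup.normalizer (H ⊓ MulAut.conj a⁻¹ • H : Subgroup G) := by
  rw [Subgroup.mem_normalizer_iff_map_conj_eq] at hnorm ⊢
  calc MulAut.conj a • (H ⊓ MulAut.conj a⁻¹ • H)
      = H ⊓ MulAut.conj a • H := conj_smul_inf_conj_inv_smul H a
    _ = MulAut.conj (a * h * a) • (H ⊓ MulAut.conj a⁻¹ • H) :=
      (conj_mul_mul_smul_inf_conj_inv_smul hh hu).symm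
    _ = H ⊓ MulAut.conj a⁻¹ • H := hnorm

end

/-- Let `G` be a group, `H` a subgroup of `G`, and `a ∈ G`. Suppose that
`Ha ∩ a⁻¹H ≠ ∅` and that the subgroup `K = H ∩ (a⁻¹Ha)` is a normal subgroup of `H`.
Then `K` is a normal subgroup of the subgroup generated by `H ∪ {a}`. -/
theorem stmt_2 {G : Type*} [Group G] (H : Subgroup G) (a : G)
    (hne : ((((H : Set G) * {a})) ∩ ({a⁻¹} * (H : Set G))).Nonempty)
    (K : Subgroup G)
    (hK : (K : Set G) = (H : Set G) ∩ ({a⁻¹} * (H : Set G) * {a}))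
    (hnormH : ∀ h ∈ H, ∀ x ∈ K, h * x * h⁻¹ ∈ K) :
    ∀ g ∈ Subgroup.closure ((H : Set G) ∪ {a}), ∀ x ∈ K, g * x * g⁻¹ ∈ K := by
  obtain rfl : K = H ⊓ MulAut.conj a⁻¹ • H :=
    SetLike.coe_injective (by rw [hK, Subgroup.coe_inf, coe_conj_inv_smul])
  rw [← Subgroup.le_normalizer_iff] at hnormH ⊢
  obtain ⟨h, hh, hu⟩ := exists_mem_mul_mul_mem_of_rightCoset_inter_leftCoset_nonempty hne
  have ha := mem_normalizer_inf_conj_inv_smul hh hu (hnormH hu)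
  exact (Subgroup.closure_le _).2 (Set.union_subset hnormH (Set.singleton_subset_iff.2 ha))
end

section
/- Let G be a finite group and S a generating subset of G with 1 ∈ S and S ≠ G. Then the minimum of |XS| − |X| over all nonempty subsets X ⊆ G with XS a proper subset of G is equal to the minimum of |XS⁻¹| − |X| over all nonempty subsets X ⊆ G with XS⁻¹ a proper subset of G. (That is, κ(S) = κ(S⁻¹).) -/
open Pointwise

variable {G : Type*} [Group G] [DecidableEq G]

/-- `X` belongs to the family `F(S)`: `X` is nonempty and `XS` is a (finite)
proper subset of `G`. -/
def MemFam (S X : Finset G) : Prop :=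
  X.Nonempty ∧ (↑(X * S) : Set G) ≠ Set.univ

/-!
If `y ∉ XS` and `s ∈ S`, then `ys⁻¹ ∉ X`: the set `Y = (XS)ᶜ` satisfies `YS⁻¹ ⊆ Xᶜ`. Hence
`X ↦ (XS)ᶜ` sends `F(S)` to `F(S⁻¹)`, and `|YS⁻¹| - |Y| ≤ |Xᶜ| - |(XS)ᶜ| = |XS| - |X|`.
By the symmetry between `S` and `S⁻¹`, both minima are equal.
-/

open Finset

/-- The differences `|XS| - |X|` for `X` in the family `F(S)`, so that `κ(S)` is the least element
of this set. The subtraction is truncated, which alters a difference only when `S = ∅`. -/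
def excesses (S : Finset G) : Set ℕ :=
  {n | ∃ X : Finset G, MemFam S X ∧ n = #(X * S) - #X}

lemma excesses_nonempty {S : Finset G} (hS : (S : Set G) ≠ Set.univ) : (excesses S).Nonempty :=
  ⟨_, 1, ⟨one_nonempty, by rwa [one_mul]⟩, rfl⟩

section Fintype

variable [Fintype G]

lemma compl_mul_mul_inv_subset_compl (X S : Finset G) : (X * S)ᶜ * S⁻¹ ⊆ Xᶜ := by
  refine mul_subset_iff.2 fun y hy t ht ↦ mem_compl.2 fun hyt ↦ mem_compl.1 hy ?_
  simpa only [mul_inv_cancel_right] using mul_mem_mul hyt (mem_inv'.1 ht)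

lemma MemFam.compl_mul {S X : Finset G} (hX : MemFam S X) : MemFam S⁻¹ (X * S)ᶜ := by
  obtain ⟨⟨x, hx⟩, hXS⟩ := hX
  rw [Ne, coe_eq_univ] at hXS
  refine ⟨by rwa [nonempty_iff_ne_empty, Ne, compl_eq_empty_iff], ?_⟩
  rw [Ne, coe_eq_univ]
  intro h
  have hx' : x ∈ (X * S)ᶜ * S⁻¹ := h ▸ mem_univ x
  exact mem_compl.1 (compl_mul_mul_inv_subset_compl X S hx') hx

lemma card_compl_mul_mul_inv_sub_le (X S : Finset G) :
    #((X * S)ᶜ * S⁻¹) - #(X * S)ᶜ ≤ #(X * S) - #X := by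
  have card_le := card_le_card (compl_mul_mul_inv_subset_compl X S)
  have card_compl_X := card_add_card_compl X
  have card_compl_XS := card_add_card_compl (X * S)
  lia

end Fintype

section Finite

variable [Finite G] {S : Finset G} {n : ℕ}

lemma exists_mem_excesses_inv_le (hn : n ∈ excesses S) : ∃ m ∈ excesses S⁻¹, m ≤ n := by
  have := Fintype.ofFinite G
  obtain ⟨X, hX, rfl⟩ := hn
  exact ⟨_, ⟨(X * S)ᶜ, hX.compl_mul, rfl⟩, card_compl_mul_mul_inv_sub_le X S⟩

lemma isLeast_excesses_inv (hn : IsLeast (excesses S) n) : IsLeast (excesses S⁻¹) n := by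
  have lower : n ∈ lowerBounds (excesses S⁻¹) := by
    intro m hm
    obtain ⟨k, hk, hkm⟩ := exists_mem_excesses_inv_le hm
    rw [inv_inv] at hk
    exact (hn.2 hk).trans hkm
  obtain ⟨m, hm, hmn⟩ := exists_mem_excesses_inv_le hn.1
  obtain rfl : m = n := hmn.antisymm (lower hm)
  exact ⟨hm, lower⟩

theorem stmt_3_general (hS : (S : Set G) ≠ Set.univ) :
    ∃ n, IsLeast (excesses S) n ∧ IsLeast (excesses S⁻¹) n := by
  have hleast : IsLeast (excesses S) (sInf (excesses S)) :=
    isLeast_csInf (excesses_nonempty hS)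
  exact ⟨_, hleast, isLeast_excesses_inv hleast⟩

end Finite

/-- Let `G` be a finite group and `S` a generating subset of `G` with `1 ∈ S` and
`S ≠ G`. Then the minimum of `|XS| − |X|` over all nonempty `X ⊆ G` with `XS` a
proper subset of `G` equals the corresponding minimum for `S⁻¹`, i.e. `κ(S) = κ(S⁻¹)`. -/
theorem stmt_3 {G : Type*} [Group G] [Fintype G] [DecidableEq G] (S : Finset G)
    (h1 : (1 : G) ∈ S) (hgen : Subgroup.closure (S : Set G) = ⊤)
    (hS : S ≠ Finset.univ) :
    sInf {n : ℕ | ∃ X : Finset G, MemFam S X ∧ n = (X * S).card - X.card} =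
    sInf {n : ℕ | ∃ X : Finset G, MemFam S⁻¹ X ∧ n = (X * S⁻¹).card - X.card} := by
  obtain ⟨n, hn, hn_inv⟩ := stmt_3_general (mt coe_eq_univ.1 hS)
  exact hn.csInf_eq.trans hn_inv.csInf_eq.symm
end

section
/- Let G be a group and S a finite generating normal subset of G with 1 ∈ S (normal meaning gSg⁻¹ = S for all g ∈ G), such that |S⁻¹S| ≤ 2|S| − 2 and S⁻¹S ≠ G. Then any atom H of S containing 1 is (the underlying set of) a subgroup of G satisfying H(S⁻¹S) = S⁻¹S. -/
open Pointwise

variable {G : Type*} [Group G] [DecidableEq G]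

/-- `X` is a fragment of `S`: a member of `F(S)` attaining the minimum of
`|XS| - |X|`. -/
def IsFragment (S X : Finset G) : Prop :=
  MemFam S X ∧ ∀ Y : Finset G, MemFam S Y →
    (X * S).card - X.card ≤ (Y * S).card - Y.card

/-- `X` is an atom of `S`: a fragment of smallest cardinality. -/
def IsAtomOf (S X : Finset G) : Prop :=
  IsFragment S X ∧ ∀ Y : Finset G, IsFragment S Y → X.card ≤ Y.card

/-!
Submodularity of `X ↦ |XS|` shows that two atoms which meet are equal; the case where their union
leaves the family `F(S)` is excluded by duality: since `S` is normal, `X ↦ (G \ XS)⁻¹` sends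
fragments to fragments. Left translates and conjugates of an atom are atoms, so an atom `H ∋ 1` is a
normal subgroup.

Comparing `H` with the singletons gives `|HS| - |H| ≤ |S| - 1`, that is, `|SH \ S| < |H|`. Hence any
two distinct cosets `sH`, `tH` with `s, t ∈ S` satisfy `|H| < |sH ∩ S| + |tH ∩ S|`. By pigeonhole
every `u ∈ s⁻¹tH` carries some point of `sH ∩ S` into `tH ∩ S`, so `u ∈ S⁻¹S`. For `u ∈ H` the same
argument works inside whichever of two distinct cosets contains more points of `S`; two such cosets
exist because `S` generates `G`.
-/

open Finset MulOpposite

variable {S X A B H : Finset G} {N : Subgroup G} {s t u : G}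

/-- A normal subset of a group: one with `g S g⁻¹ = S` for all `g`, written out for elements. -/
def IsNormalFinset (S : Finset G) : Prop :=
  ∀ g x : G, g * x * g⁻¹ ∈ S ↔ x ∈ S

namespace IsNormalFinset

lemma conj_smul_eq (hS : IsNormalFinset S) (g : G) : MulAut.conj g • S = S := by
  ext x
  rw [← inv_smul_mem_iff, ← map_inv, MulAut.smul_def, MulAut.conj_apply]
  exact hS g⁻¹ x

lemma of_conj_smul_eq (hS : ∀ g : G, MulAut.conj g • S = S) : IsNormalFinset S := by
  intro g x
  conv_lhs => rw [← hS g, ← MulAut.conj_apply, ← MulAut.smul_def]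
  exact smul_mem_smul_finset_iff _

lemma op_smul_eq_smul (hS : IsNormalFinset S) (g : G) : op g • S = g • S := by
  ext x
  rw [← inv_smul_mem_iff, ← inv_smul_mem_iff, ← op_inv, op_smul_eq_mul, smul_eq_mul,
    ← hS g (g⁻¹ * x), mul_inv_cancel_left]

lemma mul_comm (hS : IsNormalFinset S) (X : Finset G) : X * S = S * X := by
  calc X * S = X.biUnion fun x ↦ x • S := (biUnion_smul_finset X S).symm
    _ = X.biUnion fun x ↦ op x • S := by simp only [hS.op_smul_eq_smul]
    _ = S * X := biUnion_op_smul_finset S X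

end IsNormalFinset

lemma card_union_mul_add_card_inter_mul_le (A B S : Finset G) :
    #((A ∪ B) * S) + #((A ∩ B) * S) ≤ #(A * S) + #(B * S) := by
  calc #((A ∪ B) * S) + #((A ∩ B) * S)
      ≤ #((A * S) ∪ (B * S)) + #((A * S) ∩ (B * S)) := by
        rw [union_mul]
        exact Nat.add_le_add_left (card_le_card inter_mul_subset) _
    _ = #(A * S) + #(B * S) := card_union_add_card_inter _ _

lemma MemFam.of_subset (hB : MemFam S B) (hA : A.Nonempty) (hAB : A ⊆ B) : MemFam S A := by
  refine ⟨hA, fun hAS ↦ hB.2 (Set.univ_subset_iff.1 ?_)⟩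
  rw [← hAS, coe_subset]
  exact mul_subset_mul_right hAB

lemma MemFam.exists_mem_notMem_subgroup (hH : MemFam S H) (hHN : (H : Set G) = N)
    (hS : S.Nonempty) (hgen : Subgroup.closure (S : Set G) = ⊤) : ∃ r ∈ S, r ∉ N := by
  by_contra! hSN
  have hN : N = ⊤ := top_le_iff.1 (hgen ▸ (Subgroup.closure_le N).2 hSN)
  apply hH.2
  rw [coe_mul, hHN, hN, Subgroup.coe_top, Set.univ_mul (coe_nonempty.2 hS)]

namespace IsFragment

lemma card_mul_lt (hX : IsFragment S X) (hS : S.Nonempty) : #(X * S) < #S + #X := by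
  obtain ⟨x, hx⟩ := hX.1.1
  have hle := hX.2 {x} (hX.1.of_subset (singleton_nonempty x) (singleton_subset_iff.2 hx))
  rw [card_singleton, card_singleton_mul] at hle
  have := hS.card_pos
  omega

lemma inter (hS : S.Nonempty) (hA : IsFragment S A) (hB : IsFragment S B)
    (hinter : (A ∩ B).Nonempty) (hunion : MemFam S (A ∪ B)) : IsFragment S (A ∩ B) := by
  refine ⟨hA.1.of_subset hinter inter_subset_left, fun Y hY ↦ ?_⟩
  have hAY := hA.2 Y hY
  have hBU := hB.2 _ hunion
  have hsubmod := card_union_mul_add_card_inter_mul_le A B S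
  have hcard := card_union_add_card_inter A B
  have hAS := card_le_card_mul_right (s := A) hS
  have hBS := card_le_card_mul_right (s := B) hS
  have hUS := card_le_card_mul_right (s := A ∪ B) hS
  omega

end IsFragment

section Duality

variable [Fintype G]

lemma IsNormalFinset.inv_compl_mul_subset (hS : IsNormalFinset S) (X : Finset G) :
    ((X * S)ᶜ)⁻¹ * S ⊆ (Xᶜ)⁻¹ := by
  intro z hz
  obtain ⟨y, hy, s, hs, rfl⟩ := mem_mul.1 hz
  rw [mem_inv', mem_compl] at hy ⊢
  intro hyX
  apply hy
  rw [hS.mul_comm]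
  exact mem_mul.2 ⟨s, hs, _, hyX, by group⟩

lemma IsFragment.inv_compl_mul (hS : IsNormalFinset S) (hS₀ : S.Nonempty)
    (hX : IsFragment S X) : IsFragment S ((X * S)ᶜ)⁻¹ := by
  have hdual := card_le_card (hS.inv_compl_mul_subset X)
  have hXpos := hX.1.1.card_pos
  have hXG := card_le_univ X
  have hXS := card_le_card_mul_right (s := X) hS₀
  rw [card_inv, card_compl] at hdual
  have hfam : MemFam S ((X * S)ᶜ)⁻¹ := by
    refine ⟨?_, fun huniv ↦ ?_⟩
    · rw [inv_nonempty_iff, nonempty_iff_ne_empty, Ne, compl_eq_empty_iff]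
      exact fun huniv ↦ hX.1.2 (coe_eq_univ.2 huniv)
    · rw [coe_eq_univ.1 huniv, card_univ] at hdual
      omega
  refine ⟨hfam, fun Y hY ↦ ?_⟩
  have hXY := hX.2 Y hY
  rw [card_inv, card_compl]
  omega

lemma IsAtomOf.card_add_card_mul_le (hS : IsNormalFinset S) (hS₀ : S.Nonempty)
    (hA : IsAtomOf S A) : #A + #(A * S) ≤ Fintype.card G := by
  have hle := hA.2 _ (hA.1.inv_compl_mul hS hS₀)
  rw [card_inv, card_compl] at hle
  have := card_le_univ (A * S)
  omega

end Duality

namespace IsAtomOf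

lemma smul_of_smul_mul_eq {α : Type*} [Group α] [MulAction α G] (hX : IsAtomOf S X) (a : α)
    (ha : (a • X) * S = a • (X * S)) : IsAtomOf S (a • X) := by
  have hfam : MemFam S (a • X) := by
    refine ⟨hX.1.1.1.smul_finset, ?_⟩
    rw [ha, coe_smul_finset, Ne, Set.smul_set_eq_univ]
    exact hX.1.1.2
  refine ⟨⟨hfam, fun Y hY ↦ ?_⟩, fun Y hY ↦ ?_⟩
  · rw [ha, card_smul_finset, card_smul_finset]
    exact hX.1.2 Y hY
  · rw [card_smul_finset]
    exact hX.2 Y hY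

lemma memFam_union (hS : IsNormalFinset S) (hS₀ : S.Nonempty) (hA : IsAtomOf S A)
    (hB : IsAtomOf S B) (hinter : (A ∩ B).Nonempty) : MemFam S (A ∪ B) := by
  refine ⟨hA.1.1.1.mono subset_union_left, fun huniv ↦ ?_⟩
  have : Finite G := Set.finite_univ_iff.1 (huniv ▸ finite_toSet _)
  have := Fintype.ofFinite G
  have hdual := hA.card_add_card_mul_le hS hS₀
  have hsubmod := card_union_mul_add_card_inter_mul_le A B S
  rw [coe_eq_univ.1 huniv, card_univ] at hsubmod
  have hfrag := hB.1.2 _ (hB.1.1.of_subset hinter inter_subset_right)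
  have hcard : #B ≤ #A := hB.2 A hA.1
  have hIS := card_le_card_mul_right (s := A ∩ B) hS₀
  have := hinter.card_pos
  omega

lemma eq_of_inter_nonempty (hS : IsNormalFinset S) (hS₀ : S.Nonempty) (hA : IsAtomOf S A)
    (hB : IsAtomOf S B) (hinter : (A ∩ B).Nonempty) : A = B := by
  have hfrag : IsFragment S (A ∩ B) :=
    hA.1.inter hS₀ hB.1 hinter (hA.memFam_union hS hS₀ hB hinter)
  have hA' : A ∩ B = A := eq_of_subset_of_card_le inter_subset_left (hA.2 _ hfrag)
  have hB' : A ∩ B = B := eq_of_subset_of_card_le inter_subset_right (hB.2 _ hfrag)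
  exact hA'.symm.trans hB'

lemma coe_eq_stabilizer (hS : IsNormalFinset S) (hS₀ : S.Nonempty) (hH : IsAtomOf S H)
    (h1H : 1 ∈ H) : (H : Set G) = MulAction.stabilizer G H := by
  ext x
  rw [mem_coe, SetLike.mem_coe, MulAction.mem_stabilizer_iff]
  have hx : x ∈ x • H := mem_smul_finset.2 ⟨1, h1H, mul_one x⟩
  refine ⟨fun hxH ↦ ?_, fun hxH ↦ hxH ▸ hx⟩
  have htranslate : IsAtomOf S (x • H) := hH.smul_of_smul_mul_eq x (smul_mul_assoc x H S)
  exact htranslate.eq_of_inter_nonempty hS hS₀ hH ⟨x, mem_inter.2 ⟨hx, hxH⟩⟩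

lemma isNormalFinset (hS : IsNormalFinset S) (hS₀ : S.Nonempty) (hH : IsAtomOf S H)
    (h1H : 1 ∈ H) : IsNormalFinset H := by
  refine .of_conj_smul_eq fun g ↦ ?_
  have hconj : IsAtomOf S (MulAut.conj g • H) := by
    refine hH.smul_of_smul_mul_eq _ ?_
    rw [smul_mul', hS.conj_smul_eq]
  refine hconj.eq_of_inter_nonempty hS hS₀ hH ⟨1, mem_inter.2 ⟨?_, h1H⟩⟩
  exact mem_smul_finset.2 ⟨1, h1H, smul_one _⟩

end IsAtomOf

lemma mem_inv_mul_of_card_lt (hAB : op u • A ⊆ B) (hcard : #B < #(A ∩ S) + #(B ∩ S)) :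
    u ∈ S⁻¹ * S := by
  rw [← card_smul_finset (op u) (A ∩ S)] at hcard
  obtain ⟨_, hy⟩ := inter_nonempty_of_card_lt_card_add_card
    ((smul_finset_subset_smul_finset inter_subset_left).trans hAB) inter_subset_left hcard
  rw [mem_inter, mem_inter] at hy
  obtain ⟨x, hx, rfl⟩ := mem_smul_finset.1 hy.1
  exact mem_mul.2 ⟨x⁻¹, inv_mem_inv (mem_inter.1 hx).2, x * u, hy.2.2, by group⟩

lemma disjoint_smul_of_inv_mul_notMem (hHN : (H : Set G) = N) (hst : s⁻¹ * t ∉ N) :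
    Disjoint (s • H) (t • H) := by
  rw [disjoint_left]
  intro z hzs hzt
  rw [← inv_smul_mem_iff, smul_eq_mul, ← mem_coe, hHN, SetLike.mem_coe] at hzs hzt
  exact hst (by simpa [mul_assoc] using N.mul_mem hzs (N.inv_mem hzt))

lemma card_lt_card_smul_inter_add_card_smul_inter (hHN : (H : Set G) = N)
    (hcard : #(S * H) < #S + #H) (hs : s ∈ S) (ht : t ∈ S) (hst : s⁻¹ * t ∉ N) :
    #H < #(s • H ∩ S) + #(t • H ∩ S) := by
  have h1H : 1 ∈ H := mem_coe.1 (hHN ▸ N.one_mem)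
  have hdisj : Disjoint (s • H \ S) (t • H \ S) :=
    (disjoint_smul_of_inv_mul_notMem hHN hst).mono sdiff_subset sdiff_subset
  have hsub : s • H \ S ∪ t • H \ S ⊆ (S * H) \ S := by
    rw [← union_sdiff_distrib]
    exact sdiff_subset_sdiff (union_subset (smul_finset_subset_mul hs) (smul_finset_subset_mul ht))
      le_rfl
  have houtside : #(s • H \ S) + #(t • H \ S) ≤ #((S * H) \ S) :=
    (card_union_of_disjoint hdisj).symm.trans_le (card_le_card hsub)
  have hs' := card_sdiff_add_card_inter (s • H) S
  have ht' := card_sdiff_add_card_inter (t • H) S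
  have hSH := card_sdiff_add_card_eq_card (subset_mul_left S h1H)
  rw [card_smul_finset] at hs' ht'
  omega

lemma smul_eq_self_of_mem_subgroup (hHN : (H : Set G) = N) (hu : u ∈ N) : u • H = H := by
  rw [← coe_inj, coe_smul_finset, hHN]
  exact smul_coe_set hu

lemma subgroup_subset_inv_mul (hHN : (H : Set G) = N) (hH : IsNormalFinset H)
    (hcard : #(S * H) < #S + #H) (hs : s ∈ S) (ht : t ∈ S) (hst : s⁻¹ * t ∉ N) :
    H ⊆ S⁻¹ * S := by
  intro u hu
  have hu' : u ∈ N := by rwa [← SetLike.mem_coe, ← hHN]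
  have hfix (g : G) : op u • g • H = g • H := by
    rw [smul_comm, hH.op_smul_eq_smul, smul_eq_self_of_mem_subgroup hHN hu']
  have hlt := card_lt_card_smul_inter_add_card_smul_inter hHN hcard hs ht hst
  obtain hle | hle := le_total #(s • H ∩ S) #(t • H ∩ S)
  · refine mem_inv_mul_of_card_lt (hfix t).subset ?_
    rw [card_smul_finset]
    omega
  · refine mem_inv_mul_of_card_lt (hfix s).subset ?_
    rw [card_smul_finset]
    omega

theorem inv_mul_mul_subgroup_eq (hHN : (H : Set G) = N) (hH : IsNormalFinset H)
    (hcard : #(S * H) < #S + #H) (hs : s ∈ S) (ht : t ∈ S) (hst : s⁻¹ * t ∉ N) :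
    S⁻¹ * S * H = S⁻¹ * S := by
  have h1H : 1 ∈ H := mem_coe.1 (hHN ▸ N.one_mem)
  refine Subset.antisymm (fun z hz ↦ ?_) (subset_mul_left _ h1H)
  obtain ⟨_, hquot, h, hh, rfl⟩ := mem_mul.1 hz
  obtain ⟨_, hinv, b, hb, rfl⟩ := mem_mul.1 hquot
  obtain ⟨a, ha, rfl⟩ := mem_inv.1 hinv
  have hhN : h ∈ N := by rwa [← SetLike.mem_coe, ← hHN]
  by_cases hab : a⁻¹ * b ∈ N
  · refine subgroup_subset_inv_mul hHN hH hcard hs ht hst ?_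
    rw [← mem_coe, hHN]
    exact N.mul_mem hab hhN
  · have hmove : op (a⁻¹ * b * h) • a • H = b • H := by
      rw [smul_comm, hH.op_smul_eq_smul, mul_smul, mul_smul,
        smul_eq_self_of_mem_subgroup hHN hhN, smul_inv_smul]
    refine mem_inv_mul_of_card_lt hmove.subset ?_
    rw [card_smul_finset]
    exact card_lt_card_smul_inter_add_card_smul_inter hHN hcard ha hb hab

theorem stmt_12_general (h1 : 1 ∈ S) (hgen : Subgroup.closure (S : Set G) = ⊤)
    (hnormal : IsNormalFinset S) (hH : IsAtomOf S H) (h1H : 1 ∈ H) :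
    H⁻¹ * H = H ∧ H * (S⁻¹ * S) = S⁻¹ * S := by
  have hS₀ : S.Nonempty := ⟨1, h1⟩
  have hHN := hH.coe_eq_stabilizer hnormal hS₀ h1H
  have hHnormal : IsNormalFinset H := hH.isNormalFinset hnormal hS₀ h1H
  have hcard : #(S * H) < #S + #H := hnormal.mul_comm H ▸ hH.1.card_mul_lt hS₀
  obtain ⟨r, hr, hrN⟩ := hH.1.1.exists_mem_notMem_subgroup hHN hS₀ hgen
  constructor
  · rw [← coe_inj, coe_mul, coe_inv, hHN, inv_coe_set, coe_mul_coe]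
  · rw [← hHnormal.mul_comm]
    exact inv_mul_mul_subgroup_eq hHN hHnormal hcard h1 hr (by simpa using hrN)

/-- Let `G` be a group and `S` a finite generating normal subset of `G` with
`1 ∈ S`, such that `|S⁻¹S| ≤ 2|S| − 2` and `S⁻¹S ≠ G`. Then any atom `H` of `S`
containing `1` is the underlying set of a subgroup of `G` satisfying
`H(S⁻¹S) = S⁻¹S`. -/
theorem stmt_12 {G : Type*} [Group G] [DecidableEq G] (S : Finset G)
    (h1 : (1 : G) ∈ S) (hgen : Subgroup.closure (S : Set G) = ⊤)
    (hnormal : ∀ g x : G, g * x * g⁻¹ ∈ S ↔ x ∈ S)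
    (hcard : (S⁻¹ * S).card ≤ 2 * S.card - 2)
    (hne : (↑(S⁻¹ * S) : Set G) ≠ Set.univ)
    (H : Finset G) (hH : IsAtomOf S H) (h1H : (1 : G) ∈ H) :
    H⁻¹ * H = H ∧ H * (S⁻¹ * S) = S⁻¹ * S := by
  exact stmt_12_general h1 hgen hnormal hH h1H
end
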